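/- Let c₀, c₁, γ₀ ∈ ℝ with 1 < c₀ ≤ γ₀ ≤ c₁. Set C := 1/c₁² and ε := (c₀ − 1)²/(2c₁²). Then ε < 1/2, and for every s ≥ 0 one has √(1+s) − (1+s)^{−1/2} + C (√(1+s) − γ₀)² (1+s)^{−1/2} ≥ ε ( √(1+s) + 1 ). -/

import Mathlib

/-!
With `t = √(1 + s) ≥ 1`, the identity
`γ² (t - t⁻¹) + (t - γ)² t⁻¹ = (γ - 1)² t + 2 γ (t - 1)` exhibits the symbol, scaled by `γ²`, as a
sum of nonnegative terms. As `t - t⁻¹ ≥ 0`, scaling by `c₁² ≥ γ²` instead only increases the left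
side, so the symbol is at least `((c₀ - 1)² / c₁²) t = 2 ε t ≥ ε (t + 1)`.
-/

section SymbolBound

variable {K : Type*} [Field K]

theorem sq_mul_sub_inv_add_sub_sq_mul_inv (γ : K) {t : K} (ht : t ≠ 0) :
    γ ^ 2 * (t - t⁻¹) + (t - γ) ^ 2 * t⁻¹ = (γ - 1) ^ 2 * t + 2 * γ * (t - 1) := by
  field_simp
  ring

variable [LinearOrder K] [IsStrictOrderedRing K] {c₀ c₁ γ t : K}

theorem sub_one_sq_mul_le_sq_mul_sub_inv_add (hγ : 0 ≤ γ) (hγc₁ : γ ≤ c₁) (ht : 1 ≤ t) :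
    (γ - 1) ^ 2 * t ≤ c₁ ^ 2 * (t - t⁻¹) + (t - γ) ^ 2 * t⁻¹ := by
  have ht_pos : 0 < t := one_pos.trans_le ht
  have h_sub_inv : 0 ≤ t - t⁻¹ := sub_nonneg.2 ((inv_le_one_of_one_le₀ ht).trans ht)
  calc (γ - 1) ^ 2 * t
      ≤ (γ - 1) ^ 2 * t + 2 * γ * (t - 1) :=
        le_add_of_nonneg_right (mul_nonneg (by positivity) (sub_nonneg.2 ht))
    _ = γ ^ 2 * (t - t⁻¹) + (t - γ) ^ 2 * t⁻¹ :=
        (sq_mul_sub_inv_add_sub_sq_mul_inv γ ht_pos.ne').symm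
    _ ≤ c₁ ^ 2 * (t - t⁻¹) + (t - γ) ^ 2 * t⁻¹ := by gcongr

theorem sub_one_sq_div_sq_mul_le_sub_inv_add (hc₀ : 1 ≤ c₀) (hc₀γ : c₀ ≤ γ) (hγc₁ : γ ≤ c₁)
    (ht : 1 ≤ t) :
    (c₀ - 1) ^ 2 / c₁ ^ 2 * t ≤ t - t⁻¹ + 1 / c₁ ^ 2 * (t - γ) ^ 2 * t⁻¹ := by
  have hγ : 0 ≤ γ := zero_le_one.trans (hc₀.trans hc₀γ)
  have hc₁ : 0 < c₁ := one_pos.trans_le (hc₀.trans (hc₀γ.trans hγc₁))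
  have h_sub_one_sq : (c₀ - 1) ^ 2 ≤ (γ - 1) ^ 2 :=
    pow_le_pow_left₀ (sub_nonneg.2 hc₀) (sub_le_sub_right hc₀γ 1) 2
  calc (c₀ - 1) ^ 2 / c₁ ^ 2 * t
      = (c₀ - 1) ^ 2 * t / c₁ ^ 2 := div_mul_eq_mul_div _ _ _
    _ ≤ (γ - 1) ^ 2 * t / c₁ ^ 2 := by gcongr
    _ ≤ (c₁ ^ 2 * (t - t⁻¹) + (t - γ) ^ 2 * t⁻¹) / c₁ ^ 2 := by
        gcongr
        exact sub_one_sq_mul_le_sq_mul_sub_inv_add hγ hγc₁ ht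
    _ = t - t⁻¹ + 1 / c₁ ^ 2 * (t - γ) ^ 2 * t⁻¹ := by
        rw [add_div, mul_div_cancel_left₀ _ (pow_pos hc₁ 2).ne']
        ring

end SymbolBound

/-- The principal-symbol inequality of Proposition 4.1: for `1 < c₀ ≤ γ₀ ≤ c₁`,
`C = 1/c₁²`, `ε = (c₀−1)²/(2c₁²)`, one has `ε < 1/2` and for all `s ≥ 0`
`√(1+s) − (1+s)^{-1/2} + C(√(1+s) − γ₀)²(1+s)^{-1/2} ≥ ε(√(1+s) + 1)`. -/
theorem principal_symbol_inequality (c₀ c₁ γ₀ : ℝ)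
    (h₀ : 1 < c₀) (h₁ : c₀ ≤ γ₀) (h₂ : γ₀ ≤ c₁)
    (C ε : ℝ) (hC : C = 1 / c₁ ^ 2) (hε : ε = (c₀ - 1) ^ 2 / (2 * c₁ ^ 2)) :
    ε < 1 / 2 ∧
    ∀ s : ℝ, 0 ≤ s →
      Real.sqrt (1 + s) - (Real.sqrt (1 + s))⁻¹
          + C * (Real.sqrt (1 + s) - γ₀) ^ 2 * (Real.sqrt (1 + s))⁻¹
        ≥ ε * (Real.sqrt (1 + s) + 1) := by
  subst hC hε
  have hc₁ : 0 < c₁ := by linarith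
  refine ⟨?_, fun s hs ↦ ?_⟩
  · have h_sq_lt : (c₀ - 1) ^ 2 < c₁ ^ 2 :=
      pow_lt_pow_left₀ (by linarith) (by linarith) two_ne_zero
    rw [div_lt_iff₀ (by positivity)]
    linarith
  · have ht : 1 ≤ √(1 + s) := Real.one_le_sqrt.2 (le_add_of_nonneg_right hs)
    calc (c₀ - 1) ^ 2 / (2 * c₁ ^ 2) * (√(1 + s) + 1)
        ≤ (c₀ - 1) ^ 2 / (2 * c₁ ^ 2) * (2 * √(1 + s)) := by
          gcongr
          linarith
      _ = (c₀ - 1) ^ 2 / c₁ ^ 2 * √(1 + s) := by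
          field_simp
      _ ≤ _ := sub_one_sq_div_sq_mul_le_sub_inv_add h₀.le h₁ h₂ ht
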